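/- Let λ be a left-infinite word and ρ a right-infinite word over a finite alphabet A. Then for every natural number n, rog_{λ,ρ}(n+1) ≥ rog_{λ,ρ}(n) − 1. -/

import Mathlib

/-- The suffix of length `n` of the left-infinite word `⋯ (lam 2)(lam 1)(lam 0)`. -/
def lSuffix {A : Type*} (lam : ℕ → A) (n : ℕ) : List A := (List.range n).reverse.map lam

/-- The prefix of length `n` of the right-infinite word `(rho 0)(rho 1)(rho 2) ⋯`. -/
def rPrefix {A : Type*} (rho : ℕ → A) (n : ℕ) : List A := (List.range n).map rho

/-- The left overlap gap between two finite words. -/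
noncomputable def logGap {A : Type*} (u v : List A) : ℕ :=
  sInf {n | ∃ x x' : List A, x.length = n ∧ x'.length = n ∧ u ++ x = x' ++ v}

/-- The right overlap gap between two finite words. -/
noncomputable def rogGap {A : Type*} (u v : List A) : ℕ :=
  sInf {n | ∃ x x' : List A, x.length = n ∧ x'.length = n ∧ x ++ u = v ++ x'}

/-- The overlap gap between two finite words. -/
noncomputable def ogGap {A : Type*} (u v : List A) : ℕ := min (logGap u v) (rogGap u v)

section

variable {A : Type*} {u v s t x x' : List A}

theorem rogGap_le (hlen : x.length = x'.length) (h : x ++ u = v ++ x') :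
    rogGap u v ≤ x.length :=
  Nat.sInf_le ⟨x, x', rfl, hlen.symm, h⟩

-- If the lengths differ, `rogGap u v` is the infimum of the empty set, with junk value `0`.
theorem exists_length_eq_rogGap (h : u.length = v.length) :
    ∃ x x' : List A, x.length = rogGap u v ∧ x'.length = rogGap u v ∧ x ++ u = v ++ x' := by
  have overlap_lengths_nonempty :
      {n | ∃ x x' : List A, x.length = n ∧ x'.length = n ∧ x ++ u = v ++ x'}.Nonempty :=
    ⟨u.length, v, u, h.symm, rfl, rfl⟩
  exact Nat.sInf_mem overlap_lengths_nonempty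

theorem rogGap_le_rogGap_append_add_length (huv : u.length = v.length)
    (hst : s.length = t.length) :
    rogGap u v ≤ rogGap (s ++ u) (v ++ t) + s.length := by
  have hlen : (s ++ u).length = (v ++ t).length := by
    rw [List.length_append, List.length_append, huv, hst, Nat.add_comm]
  obtain ⟨x, x', hx, hx', h⟩ := exists_length_eq_rogGap hlen
  have overlap : (x ++ s) ++ u = v ++ (t ++ x') := by
    simpa only [List.append_assoc] using h
  calc
    rogGap u v ≤ (x ++ s).length :=
      rogGap_le (by rw [List.length_append, List.length_append, hx, hx', hst, Nat.add_comm])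
        overlap
    _ = rogGap (s ++ u) (v ++ t) + s.length := by rw [List.length_append, hx]

theorem length_lSuffix (lam : ℕ → A) (n : ℕ) : (lSuffix lam n).length = n := by
  simp [lSuffix]

theorem length_rPrefix (rho : ℕ → A) (n : ℕ) : (rPrefix rho n).length = n := by
  simp [rPrefix]

theorem lSuffix_succ (lam : ℕ → A) (n : ℕ) :
    lSuffix lam (n + 1) = [lam n] ++ lSuffix lam n := by
  simp [lSuffix, List.range_succ]

theorem rPrefix_succ (rho : ℕ → A) (n : ℕ) :
    rPrefix rho (n + 1) = rPrefix rho n ++ [rho n] := by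
  simp [rPrefix, List.range_succ]

theorem rog_succ_ge_general (lam rho : ℕ → A) (n : ℕ) :
    rogGap (lSuffix lam n) (rPrefix rho n) ≤
      rogGap (lSuffix lam (n + 1)) (rPrefix rho (n + 1)) + 1 := by
  rw [lSuffix_succ, rPrefix_succ]
  have hlen : (lSuffix lam n).length = (rPrefix rho n).length := by
    rw [length_lSuffix, length_rPrefix]
  exact rogGap_le_rogGap_append_add_length hlen rfl

end

/-- For a left-infinite word `lam` and a right-infinite word `rho` over a finite
alphabet, `rog(n+1) ≥ rog(n) - 1`. -/
theorem rog_succ_ge {A : Type*} [Fintype A] [Nonempty A] (lam rho : ℕ → A) (n : ℕ) :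
    rogGap (lSuffix lam n) (rPrefix rho n) - 1 ≤
      rogGap (lSuffix lam (n + 1)) (rPrefix rho (n + 1)) :=
  Nat.sub_le_of_le_add (rog_succ_ge_general lam rho n)
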